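/- Let G be a finite group and B a G-invariant set of 3-element subsets of G satisfying the matroid basis exchange axiom. If f_{g,h} ⊆ B and f_{g',h'} ⊆ B, then f_{g,g'} ⊆ B or f_{g,h'} ⊆ B. -/

import Mathlib

/-- The orbit `f_{g,h} = {{a, a*g, a*h} : a ∈ G}`. -/
def tripleOrbit {G : Type*} [Group G] [DecidableEq G] (g h : G) : Set (Finset G) :=
  {s | ∃ a : G, s = {a, a * g, a * h}}

/-- `B` is invariant under the left multiplication action of `G` on subsets. -/
def LeftInvariant {G : Type*} [Group G] [DecidableEq G] (B : Set (Finset G)) : Prop :=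
  ∀ g : G, ∀ s ∈ B, s.image (fun x => g * x) ∈ B

/-- The (strong) matroid basis exchange axiom. -/
def ExchangeAxiom {α : Type*} [DecidableEq α] (B : Set (Finset α)) : Prop :=
  ∀ X ∈ B, ∀ Y ∈ B, ∀ x ∈ X, x ∉ Y → ∃ y ∈ Y, y ∉ X ∧ insert y (X.erase x) ∈ B

/-!
Since `{1, g, h} ∈ B`, the pair `{1, g}` extends to a member of `B` by one new element. The exchange
axiom then extends it by an element of any given member of `B`, and in `{1, g', h'}` the only
candidates are `g'` and `h'`. By invariance, an orbit with one member in `B` lies in `B`.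
-/

theorem ExchangeAxiom.exists_insert_mem {α : Type*} [DecidableEq α] {B : Set (Finset α)}
    (hB : ExchangeAxiom B) {S Y : Finset α} {x : α} (hxS : x ∉ S) (hS : insert x S ∈ B)
    (hY : Y ∈ B) : ∃ y ∈ Y, y ∉ S ∧ insert y S ∈ B := by
  by_cases hxY : x ∈ Y
  · exact ⟨x, hxY, hxS, hS⟩
  · obtain ⟨y, hyY, hy, hyB⟩ := hB _ hS _ hY x (Finset.mem_insert_self x S) hxY
    rw [Finset.erase_insert hxS] at hyB
    exact ⟨y, hyY, fun hyS => hy (Finset.mem_insert_of_mem hyS), hyB⟩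

section Group

variable {G : Type*} [Group G] [DecidableEq G] {B : Set (Finset G)}

theorem LeftInvariant.tripleOrbit_subset_iff (hB : LeftInvariant B) {g h : G} :
    tripleOrbit g h ⊆ B ↔ {1, g, h} ∈ B := by
  refine ⟨fun horbit => horbit ⟨1, by simp only [one_mul]⟩, ?_⟩
  rintro hmem _ ⟨a, rfl⟩
  simpa only [Finset.image_insert, Finset.image_singleton, mul_one] using hB a _ hmem

theorem stmt_11_general (hinv : LeftInvariant B) (hexch : ExchangeAxiom B) {g h g' h' : G}
    (hh : h ≠ 1) (hgh : g ≠ h) (h1 : tripleOrbit g h ⊆ B) (h2 : tripleOrbit g' h' ⊆ B) :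
    tripleOrbit g g' ⊆ B ∨ tripleOrbit g h' ⊆ B := by
  have triple_eq_insert (k : G) : ({1, g, k} : Finset G) = insert k {1, g} := by
    rw [Finset.pair_comm g k, Finset.insert_comm]
  simp only [hinv.tripleOrbit_subset_iff] at h1 h2 ⊢
  simp only [triple_eq_insert] at h1 ⊢
  have h_notMem : h ∉ ({1, g} : Finset G) := by simp [hh, hgh.symm]
  obtain ⟨y, hy, hyS, hyB⟩ := hexch.exists_insert_mem h_notMem h1 h2
  simp only [Finset.mem_insert, Finset.mem_singleton] at hy
  obtain rfl | rfl | rfl := hy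
  · exact absurd (Finset.mem_insert_self 1 {g}) hyS
  · exact Or.inl hyB
  · exact Or.inr hyB

end Group

/-- If `f_{g,h} ⊆ B` and `f_{g',h'} ⊆ B`, then `f_{g,g'} ⊆ B` or `f_{g,h'} ⊆ B`. -/
theorem stmt_11 {G : Type*} [Group G] [Fintype G] [DecidableEq G]
    (B : Set (Finset G)) (hcard : ∀ s ∈ B, s.card = 3)
    (hinv : LeftInvariant B) (hexch : ExchangeAxiom B)
    (g h g' h' : G) (hg : g ≠ 1) (hh : h ≠ 1) (hgh : g ≠ h)
    (hg' : g' ≠ 1) (hh' : h' ≠ 1) (hgh' : g' ≠ h')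
    (h1 : tripleOrbit g h ⊆ B) (h2 : tripleOrbit g' h' ⊆ B) :
    tripleOrbit g g' ⊆ B ∨ tripleOrbit g h' ⊆ B :=
  stmt_11_general hinv hexch hh hgh h1 h2
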